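/- arXiv:2405.13458 — 2 statements merged into one kernel-verified Lean document; each statement's English description precedes it below -/
import Mathlib

section
/- Let λ ≥ 2 and n ≥ 1 be integers, let p_1, …, p_{λ^n} be trigonometric polynomials, let ν_1, …, ν_{λ^n} be an enumeration of Λ, and define τ(ξ) = λ^{−n} Σ_{l=1}^{λ^n} p_l(λξ) e^{i ν_l·ξ}. Then for all ξ ∈ ℝⁿ, Σ_{γ∈Γ} |τ(ξ + γ)|² = λ^{−n} Σ_{l=1}^{λ^n} |p_l(λξ)|². -/
open MeasureTheory Finset Filter Topology

noncomputable section

/-- `f` is a trigonometric polynomial on ℝⁿ: a finite sum ξ ↦ Σ_{k∈F} h(k) e^{−i k·ξ}. -/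
def IsTrigPoly (n : ℕ) (f : (Fin n → ℝ) → ℂ) : Prop :=
  ∃ (F : Finset (Fin n → ℤ)) (h : (Fin n → ℤ) → ℂ),
    ∀ ξ : Fin n → ℝ,
      f ξ = ∑ k ∈ F, h k * Complex.exp (-Complex.I * ∑ i, (k i : ℂ) * (ξ i : ℂ))

/-- Λ = {0,…,λ−1}ⁿ as a finite subset of ℤⁿ. -/
def Lambda (lam n : ℕ) : Finset (Fin n → ℤ) :=
  Fintype.piFinset fun _ => Finset.Ico (0 : ℤ) (lam : ℤ)

/-- The translate ξ + (2π/λ)·ρ, i.e. ξ + γ for γ = (2π/λ)ρ ∈ Γ. -/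
def gshift (lam n : ℕ) (ξ : Fin n → ℝ) (ρ : Fin n → ℤ) : Fin n → ℝ :=
  fun i => ξ i + (2 * Real.pi / lam) * (ρ i : ℝ)

/-- e^{i ν·ξ}. -/
def eI (n : ℕ) (ν : Fin n → ℤ) (ξ : Fin n → ℝ) : ℂ :=
  Complex.exp (Complex.I * ∑ i, (ν i : ℂ) * (ξ i : ℂ))

/-- The dilate λ·ξ. -/
def dil (lam n : ℕ) (ξ : Fin n → ℝ) : Fin n → ℝ := fun i => (lam : ℝ) * ξ i

/-!
For `ξ` fixed, `ρ ↦ e^{i ν_l·(ξ + 2πρ/λ)}` is, up to a unimodular constant, a character of the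
finite group `(ℤ/λ)ⁿ`, while `p_l (λ(ξ + 2πρ/λ)) = p_l (λξ)` by periodicity. So `ρ ↦ τ (ξ + 2πρ/λ)`
is a linear combination of distinct characters of `(ℤ/λ)ⁿ`, and the identity is Parseval's for that
group.
-/

section Characters

variable {𝕜 G L E : Type*} [RCLike 𝕜] [AddCommGroup G] [Fintype G] [Fintype L]
  [SeminormedAddCommGroup E] [InnerProductSpace 𝕜 E]

theorem sum_conj_addChar_mul_addChar (ψ χ : AddChar G 𝕜) :
    ∑ g, starRingEnd 𝕜 (ψ g) * χ g = if ψ = χ then (Fintype.card G : 𝕜) else 0 := by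
  simpa [← AddChar.inv_apply_eq_conj, sub_eq_zero, eq_comm (a := χ), AddChar.sub_apply',
    div_eq_inv_mul] using AddChar.sum_eq_ite (χ - ψ)

theorem sum_norm_sq_sum_addChar_smul {ψ : L → AddChar G 𝕜} (hψ : Function.Injective ψ)
    (c : L → E) :
    ∑ g, ‖∑ l, ψ l g • c l‖ ^ 2 = Fintype.card G * ∑ l, ‖c l‖ ^ 2 := by
  classical
  apply RCLike.ofReal_injective (K := 𝕜)
  push_cast
  calc ∑ g, (‖∑ l, ψ l g • c l‖ : 𝕜) ^ 2
      = ∑ g, ∑ l, ∑ m, starRingEnd 𝕜 (ψ l g) * ψ m g * inner 𝕜 (c l) (c m) := by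
        refine sum_congr rfl fun g _ ↦ ?_
        rw [← inner_self_eq_norm_sq_to_K, sum_inner]
        simp only [inner_sum, inner_smul_left, inner_smul_right, mul_assoc, mul_left_comm]
    _ = ∑ l, ∑ m, (∑ g, starRingEnd 𝕜 (ψ l g) * ψ m g) * inner 𝕜 (c l) (c m) := by
        rw [sum_comm]
        refine sum_congr rfl fun l _ ↦ ?_
        rw [sum_comm]
        simp only [sum_mul]
    _ = Fintype.card G * ∑ l, (‖c l‖ : 𝕜) ^ 2 := by
        simp [sum_conj_addChar_mul_addChar, hψ.eq_iff, mul_sum, inner_self_eq_norm_sq_to_K]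

end Characters

section DotAddChar

variable {N : ℕ} [NeZero N] {ι : Type*} [Fintype ι]

/-- The additive character `x ↦ exp (2πi (k · x) / N)` of the finite group `(ℤ/N)^ι`, where `k · x`
is the dot product. -/
def dotAddChar (k : ι → ZMod N) : AddChar (ι → ZMod N) ℂ :=
  ZMod.stdAddChar.compAddMonoidHom (AddMonoidHom.mk' (k ⬝ᵥ ·) (dotProduct_add k))

theorem dotAddChar_apply (k x : ι → ZMod N) : dotAddChar k x = ZMod.stdAddChar (k ⬝ᵥ x) := rfl

theorem dotAddChar_injective :
    Function.Injective (dotAddChar : (ι → ZMod N) → AddChar (ι → ZMod N) ℂ) := by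
  classical
  intro k m h
  funext i
  apply ZMod.injective_stdAddChar
  simpa [dotAddChar_apply] using DFunLike.congr_fun h (Pi.single i 1)

theorem dotAddChar_intCast (k x : ι → ℤ) :
    dotAddChar (fun i ↦ (k i : ZMod N)) (fun i ↦ (x i : ZMod N))
      = Complex.exp (2 * Real.pi * Complex.I * (∑ i, (k i : ℂ) * x i) / N) := by
  have hdot : (fun i ↦ (k i : ZMod N)) ⬝ᵥ (fun i ↦ (x i : ZMod N))
      = ((∑ i, k i * x i : ℤ) : ZMod N) := by simp [dotProduct]
  rw [dotAddChar_apply, hdot, ZMod.stdAddChar_coe]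
  push_cast
  rfl

end DotAddChar

section Periodicity

open Function

theorem periodic_sum {ι α β : Type*} [AddCommMonoid α] {f : α → β} {c : ι → α} (s : Finset ι)
    (hf : ∀ i ∈ s, Periodic f (c i)) : Periodic f (∑ i ∈ s, c i) :=
  sum_induction c (Periodic f) (fun _ _ ↦ Periodic.add_period) (fun x ↦ by rw [add_zero]) hf

theorem periodic_zsmul_of_periodic_single {ι β R : Type*} [Finite ι] [DecidableEq ι]
    [AddCommGroup R] {f : (ι → R) → β} {T : R} (hf : ∀ i, Periodic f (Pi.single i T))
    (k : ι → ℤ) : Periodic f (fun i ↦ k i • T) := by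
  cases nonempty_fintype ι
  rw [← univ_sum_single fun i ↦ k i • T]
  refine periodic_sum _ fun i _ ↦ ?_
  rw [Pi.single_zsmul]
  exact (hf i).zsmul (k i)

theorem IsTrigPoly.periodic_single {n : ℕ} {f : (Fin n → ℝ) → ℂ} (hf : IsTrigPoly n f)
    (i : Fin n) : Periodic f (Pi.single i (2 * Real.pi)) := by
  obtain ⟨F, h, hf⟩ := hf
  intro ξ
  rw [hf, hf]
  refine sum_congr rfl fun k _ ↦ ?_
  have hphase : ∑ j, (k j : ℂ) * ((ξ + Pi.single i (2 * Real.pi) : Fin n → ℝ) j : ℂ)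
      = ∑ j, (k j : ℂ) * (ξ j : ℂ) + k i * (2 * Real.pi) := by
    simp [mul_add, sum_add_distrib, Pi.single_apply, apply_ite Complex.ofReal]
  rw [hphase]
  congr 1
  refine Complex.exp_eq_exp_iff_exists_int.2 ⟨-k i, ?_⟩
  push_cast
  ring

end Periodicity

section Lambda

variable {lam n : ℕ} [NeZero lam]

theorem val_intCast_of_mem_Lambda {ρ : Fin n → ℤ} (hρ : ρ ∈ Lambda lam n) :
    (fun i ↦ ((ρ i : ZMod lam).val : ℤ)) = ρ := by
  funext i
  have hi := mem_Ico.1 (Fintype.mem_piFinset.1 hρ i)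
  rw [ZMod.val_intCast, Int.emod_eq_of_lt hi.1 hi.2]

theorem val_mem_Lambda (x : Fin n → ZMod lam) : (fun i ↦ ((x i).val : ℤ)) ∈ Lambda lam n :=
  Fintype.mem_piFinset.2 fun i ↦ mem_Ico.2 ⟨by positivity, mod_cast (x i).val_lt⟩

theorem intCast_injOn_Lambda :
    Set.InjOn (fun (ρ : Fin n → ℤ) i ↦ (ρ i : ZMod lam)) (Lambda lam n) :=
  Set.LeftInvOn.injOn (f₁' := fun x i ↦ ((x i).val : ℤ)) fun _ ↦ val_intCast_of_mem_Lambda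

theorem sum_Lambda_intCast {M : Type*} [AddCommMonoid M] (f : (Fin n → ZMod lam) → M) :
    ∑ ρ ∈ Lambda lam n, f (fun i ↦ (ρ i : ZMod lam)) = ∑ x, f x :=
  sum_nbij' (fun ρ i ↦ (ρ i : ZMod lam)) (fun x i ↦ ((x i).val : ℤ)) (fun _ _ ↦ mem_univ _)
    (fun x _ ↦ val_mem_Lambda x) (fun _ ↦ val_intCast_of_mem_Lambda) (fun x _ ↦ by simp)
    fun _ _ ↦ rfl

theorem dil_gshift (ξ : Fin n → ℝ) (ρ : Fin n → ℤ) :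
    dil lam n (gshift lam n ξ ρ) = dil lam n ξ + fun i ↦ ρ i • (2 * Real.pi) := by
  have hlam : (lam : ℝ) ≠ 0 := NeZero.ne _
  funext i
  simp only [dil, gshift, Pi.add_apply, zsmul_eq_mul]
  field_simp

theorem eI_gshift (ν : Fin n → ℤ) (ξ : Fin n → ℝ) (ρ : Fin n → ℤ) :
    eI n ν (gshift lam n ξ ρ)
      = dotAddChar (fun i ↦ (ν i : ZMod lam)) (fun i ↦ (ρ i : ZMod lam)) * eI n ν ξ := by
  simp only [dotAddChar_intCast, eI, gshift, ← Complex.exp_add]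
  congr 1
  simp only [mul_sum, sum_div, ← sum_add_distrib]
  refine sum_congr rfl fun i _ ↦ ?_
  push_cast
  ring

end Lambda

theorem norm_eI {n : ℕ} (ν : Fin n → ℤ) (ξ : Fin n → ℝ) : ‖eI n ν ξ‖ = 1 := by
  rw [eI]
  exact_mod_cast Complex.norm_exp_I_mul_ofReal (∑ i, ν i * ξ i)

theorem sum_sq_mask_translates_general {lam n : ℕ} [NeZero lam] {L E : Type*} [Fintype L]
    [SeminormedAddCommGroup E] [InnerProductSpace ℂ E] (p : L → (Fin n → ℝ) → E)
    (hp : ∀ l i, Function.Periodic (p l) (Pi.single i (2 * Real.pi))) (ν : L → Fin n → ℤ)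
    (hν : Function.Injective fun l i ↦ (ν l i : ZMod lam)) (τ : (Fin n → ℝ) → E)
    (hτ : ∀ ξ, τ ξ = ((lam : ℂ) ^ n)⁻¹ • ∑ l, eI n (ν l) ξ • p l (dil lam n ξ))
    (ξ : Fin n → ℝ) :
    ∑ ρ ∈ Lambda lam n, ‖τ (gshift lam n ξ ρ)‖ ^ 2
      = ((lam : ℝ) ^ n)⁻¹ * ∑ l, ‖p l (dil lam n ξ)‖ ^ 2 := by
  set c : L → E := fun l ↦ eI n (ν l) ξ • p l (dil lam n ξ) with hc
  set ψ : L → AddChar (Fin n → ZMod lam) ℂ := fun l ↦ dotAddChar fun i ↦ (ν l i : ZMod lam)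
  have hψ : Function.Injective ψ := dotAddChar_injective.comp hν
  have hτ_gshift (ρ : Fin n → ℤ) : τ (gshift lam n ξ ρ)
      = ((lam : ℂ) ^ n)⁻¹ • ∑ l, ψ l (fun i ↦ (ρ i : ZMod lam)) • c l := by
    have hp_dil (l : L) : p l (dil lam n (gshift lam n ξ ρ)) = p l (dil lam n ξ) := by
      rw [dil_gshift, periodic_zsmul_of_periodic_single (hp l) ρ]
    simp only [hτ, hp_dil, eI_gshift, mul_smul, ψ, hc]
  calc ∑ ρ ∈ Lambda lam n, ‖τ (gshift lam n ξ ρ)‖ ^ 2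
      = (((lam : ℝ) ^ n)⁻¹) ^ 2
          * ∑ ρ ∈ Lambda lam n, ‖∑ l, ψ l (fun i ↦ (ρ i : ZMod lam)) • c l‖ ^ 2 := by
        simp [hτ_gshift, norm_smul, mul_pow, mul_sum]
    _ = (((lam : ℝ) ^ n)⁻¹) ^ 2 * ∑ x, ‖∑ l, ψ l x • c l‖ ^ 2 := by
        rw [sum_Lambda_intCast fun x ↦ ‖∑ l, ψ l x • c l‖ ^ 2]
    _ = (((lam : ℝ) ^ n)⁻¹) ^ 2 * ((lam : ℝ) ^ n * ∑ l, ‖c l‖ ^ 2) := by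
        simp [sum_norm_sq_sum_addChar_smul hψ]
    _ = ((lam : ℝ) ^ n)⁻¹ * ∑ l, ‖p l (dil lam n ξ)‖ ^ 2 := by
        have hlam : (lam : ℝ) ≠ 0 := NeZero.ne _
        simp only [hc, norm_smul, norm_eI, one_mul]
        field_simp

/-- for τ(ξ) = λ^{−n} Σ_l p_l(λξ) e^{iν_l·ξ} with ν_1,…,ν_{λⁿ} an
enumeration of Λ, one has Σ_{γ∈Γ} |τ(ξ+γ)|² = λ^{−n} Σ_l |p_l(λξ)|². -/
theorem sum_sq_mask_translates (lam n : ℕ) (hlam : 2 ≤ lam) (hn : 1 ≤ n)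
    (p : Fin (lam ^ n) → (Fin n → ℝ) → ℂ) (hp : ∀ l, IsTrigPoly n (p l))
    (ν : Fin (lam ^ n) → Fin n → ℤ)
    (hν_inj : Function.Injective ν) (hν_mem : ∀ l, ν l ∈ Lambda lam n)
    (hν_surj : ∀ ρ ∈ Lambda lam n, ∃ l, ν l = ρ)
    (τ : (Fin n → ℝ) → ℂ)
    (hτ : ∀ ξ, τ ξ = ((lam : ℂ) ^ n)⁻¹ * ∑ l, p l (dil lam n ξ) * eI n (ν l) ξ)
    (ξ : Fin n → ℝ) :
    ∑ ρ ∈ Lambda lam n, ‖τ (gshift lam n ξ ρ)‖ ^ 2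
      = ((lam : ℝ) ^ n)⁻¹ * ∑ l, ‖p l (dil lam n ξ)‖ ^ 2 := by
  have : NeZero lam := ⟨by lia⟩
  exact sum_sq_mask_translates_general p (fun l ↦ (hp l).periodic_single) ν
    (fun _ _ h ↦ hν_inj (intCast_injOn_Lambda (hν_mem _) (hν_mem _) h)) τ
    (by simpa only [smul_eq_mul, mul_comm (eI n _ _)] using hτ) ξ
end
end

section
/- Let λ ≥ 2 and n ≥ 1 be integers and N ≤ λ^n. Let S be a rational trigonometric polynomial nonnegative on ℝⁿ. For each 1 ≤ l ≤ N suppose rational trigonometric polynomials p_l and g_l satisfy 1/S(ξ) − |p_l(ξ)|² = λⁿ |g_l(ξ)|² for all ξ at which both sides are defined, and if N < λ^n, for l = N+1, …, λ^n let p_l be rational trigonometric polynomials with |p_l(ξ)|² = 1/S(ξ). Let s be a rational trigonometric polynomial with |s(ξ)|² = 1/S(ξ), let ν_1, …, ν_{λ^n} enumerate Λ, and define τ(ξ) = (λ^{−n} Σ_{l=1}^{λ^n} p_l(λξ) e^{i ν_l·ξ}) / conj(s(ξ)). Then for all ξ at which both sides are defined, 1/S(λξ) − Σ_{γ∈Γ}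 |τ(ξ + γ)|² / S(ξ + γ) = Σ_{l=1}^{N} |g_l(λξ)|². -/
open MeasureTheory Finset Filter Topology

noncomputable section

/-- A rational trigonometric polynomial: a quotient of two trigonometric polynomials
(with denominator not identically zero).  Its value at ξ (using Lean's total division,
with junk value 0 where the denominator vanishes) is `num ξ / den ξ`; it is *defined*
at ξ precisely when `den ξ ≠ 0`. -/
structure RatTrigPoly (n : ℕ) where
  num : (Fin n → ℝ) → ℂ
  den : (Fin n → ℝ) → ℂ
  num_trig : IsTrigPoly n num
  den_trig : IsTrigPoly n den
  den_ne : ∃ ξ, den ξ ≠ 0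

/-- Pointwise value of a rational trigonometric polynomial. -/
def RatTrigPoly.eval {n : ℕ} (f : RatTrigPoly n) (ξ : Fin n → ℝ) : ℂ := f.num ξ / f.den ξ

instance {n : ℕ} : CoeFun (RatTrigPoly n) (fun _ => (Fin n → ℝ) → ℂ) := ⟨RatTrigPoly.eval⟩

/-- `f` is defined at `ξ` iff its denominator does not vanish there. -/
def RatTrigPoly.DefinedAt {n : ℕ} (f : RatTrigPoly n) (ξ : Fin n → ℝ) : Prop := f.den ξ ≠ 0

/-!
Up to division by `conj s`, the function `τ` is `λ⁻ⁿ ∑ₗ pₗ(λξ) e^{i νₗ·ξ}`. Each `pₗ(λ·)` is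
`Γ`-periodic, so on the coset `ξ + Γ` only the exponentials vary; the `νₗ` being incongruent
mod `λ`, these are orthogonal there, and Parseval turns the sum over `Γ` into `λ⁻ⁿ ∑ₗ |pₗ(λξ)|²`.
The division by `conj s` cancels against the weight `1/S = |s|²`. Finally `1/S(λξ)` is the average
over `l` of `|pₗ(λξ)|²` plus `λⁿ |gₗ(λξ)|²` or `0`.
-/

/-- Invariance of a function on `ℝⁿ` under translations by the lattice `(2πℤ)ⁿ`. -/
def IsTwoPiPeriodic {n : ℕ} (f : (Fin n → ℝ) → ℂ) : Prop :=
  ∀ k : Fin n → ℤ, Function.Periodic f fun i ↦ 2 * Real.pi * k i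

/-- The mask `λ⁻ⁿ ∑ₗ pₗ(λξ) e^{i νₗ·ξ}` with polyphase components `pₗ`; in the theorem,
`τ` is this mask divided by `conj s`. -/
def polyphaseMask (lam : ℕ) {n : ℕ} {ι : Type*} [Fintype ι] (p : ι → (Fin n → ℝ) → ℂ)
    (ν : ι → Fin n → ℤ) (ξ : Fin n → ℝ) : ℂ :=
  ((lam : ℂ) ^ n)⁻¹ * ∑ l, p l (dil lam n ξ) * eI n (ν l) ξ

theorem IsTrigPoly.isTwoPiPeriodic {n : ℕ} {f : (Fin n → ℝ) → ℂ} (hf : IsTrigPoly n f) :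
    IsTwoPiPeriodic f := by
  intro k ξ
  obtain ⟨F, h, hF⟩ := hf
  rw [hF, hF]
  refine sum_congr rfl fun m _ ↦ ?_
  rw [Complex.exp_eq_exp_iff_exists_int.mpr ⟨-∑ i, m i * k i, ?_⟩]
  simp only [Pi.add_apply, mul_sum, Int.cast_neg, Int.cast_sum, neg_mul, sum_mul,
    ← sum_neg_distrib, ← sum_add_distrib]
  refine sum_congr rfl fun i _ ↦ ?_
  push_cast
  ring

theorem RatTrigPoly.isTwoPiPeriodic {n : ℕ} (f : RatTrigPoly n) : IsTwoPiPeriodic f := fun k ↦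
  (f.num_trig.isTwoPiPeriodic k).div (f.den_trig.isTwoPiPeriodic k)

theorem eq_of_modEq_of_mem_Lambda {lam n : ℕ} {a b : Fin n → ℤ} (ha : a ∈ Lambda lam n)
    (hb : b ∈ Lambda lam n) (hab : ∀ i, a i ≡ b i [ZMOD lam]) : a = b := by
  simp only [Lambda, Fintype.mem_piFinset, mem_Ico] at ha hb
  funext i
  rw [← Int.emod_eq_of_lt (ha i).1 (ha i).2, hab i, Int.emod_eq_of_lt (hb i).1 (hb i).2]

theorem sum_Ico_zpow_mul_of_isPrimitiveRoot {K : Type*} [Field K] {ζ : K} {m : ℕ}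
    (hζ : IsPrimitiveRoot ζ m) (k : ℤ) :
    ∑ r ∈ Ico (0 : ℤ) m, ζ ^ (k * r) = if (m : ℤ) ∣ k then (m : K) else 0 := by
  have hgeom : ∑ r ∈ Ico (0 : ℤ) m, ζ ^ (k * r) = ∑ r ∈ range m, (ζ ^ k) ^ r := by
    simp [Int.Ico_eq_finset_map, zpow_mul]
  rw [hgeom]
  split_ifs with hk
  · simp [(hζ.zpow_eq_one_iff_dvd k).mpr hk]
  · have hne : ζ ^ k ≠ 1 := mt (hζ.zpow_eq_one_iff_dvd k).mp hk
    have hpow : (ζ ^ k) ^ m = 1 := by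
      rw [← zpow_natCast, zpow_comm, hζ.zpow_eq_one, one_zpow]
    rw [geom_sum_eq hne, hpow, sub_self, zero_div]

theorem sub_inv_mul_sum_eq_sum {K ι : Type*} [Field K] [Fintype ι] {c w : K} {a b : ι → K}
    {A : Finset ι} (hc : c ≠ 0) (hcard : (Fintype.card ι : K) = c)
    (hA : ∀ l ∈ A, w - a l = c * b l) (hAc : ∀ l ∉ A, a l = w) :
    w - c⁻¹ * ∑ l, a l = ∑ l ∈ A, b l := by
  have hsum : c * w - ∑ l, a l = c * ∑ l ∈ A, b l := calc
    c * w - ∑ l, a l = ∑ l, (w - a l) := by simp [hcard]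
    _ = ∑ l ∈ A, (w - a l) :=
      (sum_subset (subset_univ A) fun l _ hl ↦ sub_eq_zero.mpr (hAc l hl).symm).symm
    _ = c * ∑ l ∈ A, b l := by rw [mul_sum, sum_congr rfl hA]
  rw [← mul_right_inj' hc, ← hsum, mul_sub, mul_inv_cancel_left₀ hc]

theorem eI_zero {n : ℕ} (ξ : Fin n → ℝ) : eI n 0 ξ = 1 := by simp [eI]

theorem eI_mul_conj_eI {n : ℕ} (a b : Fin n → ℤ) (ξ : Fin n → ℝ) :
    eI n a ξ * starRingEnd ℂ (eI n b ξ) = eI n (a - b) ξ := by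
  simp only [eI, ← Complex.exp_conj, ← Complex.exp_add, map_mul, map_sum, Complex.conj_I,
    Complex.conj_ofReal, map_intCast, Pi.sub_apply, Int.cast_sub, sub_mul, sum_sub_distrib]
  ring_nf

theorem eI_gshift_s8 {lam n : ℕ} (k : Fin n → ℤ) (ξ : Fin n → ℝ) (ρ : Fin n → ℤ) :
    eI n k (gshift lam n ξ ρ)
      = eI n k ξ * ∏ i, Complex.exp (2 * Real.pi * Complex.I / lam) ^ (k i * ρ i) := by
  simp only [eI, gshift, ← Complex.exp_int_mul, ← Complex.exp_sum, ← Complex.exp_add, mul_sum,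
    ← sum_add_distrib]
  congr! 2 with i
  push_cast
  ring

section Shifts

variable {lam n : ℕ} [NeZero lam]

theorem IsTwoPiPeriodic.apply_dil_gshift {f : (Fin n → ℝ) → ℂ} (hf : IsTwoPiPeriodic f)
    (ξ : Fin n → ℝ) (ρ : Fin n → ℤ) : f (dil lam n (gshift lam n ξ ρ)) = f (dil lam n ξ) := by
  rw [← hf ρ (dil lam n ξ)]
  congr 1
  funext i
  have hlam : (lam : ℝ) ≠ 0 := NeZero.ne _
  simp only [dil, gshift, Pi.add_apply]
  field_simp

theorem sum_eI_gshift (k : Fin n → ℤ) (ξ : Fin n → ℝ) :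
    ∑ ρ ∈ Lambda lam n, eI n k (gshift lam n ξ ρ)
      = if ∀ i, (lam : ℤ) ∣ k i then (lam : ℂ) ^ n * eI n k ξ else 0 := by
  have hζ := Complex.isPrimitiveRoot_exp lam (NeZero.ne lam)
  simp only [eI_gshift_s8, ← mul_sum, Lambda]
  rw [← prod_univ_sum (fun _ ↦ Ico (0 : ℤ) lam) fun i r ↦
    Complex.exp (2 * Real.pi * Complex.I / lam) ^ (k i * r)]
  simp only [sum_Ico_zpow_mul_of_isPrimitiveRoot hζ, Fintype.prod_ite_zero, prod_const, card_univ,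
    Fintype.card_fin, mul_ite, mul_zero]
  rw [mul_comm]

variable {ι : Type*} {ν : ι → Fin n → ℤ}

theorem sum_eI_mul_conj_eI_gshift [DecidableEq ι]
    (hν : ∀ l m, (∀ i, ν l i ≡ ν m i [ZMOD lam]) → l = m) (ξ : Fin n → ℝ) (l m : ι) :
    ∑ ρ ∈ Lambda lam n,
        eI n (ν l) (gshift lam n ξ ρ) * starRingEnd ℂ (eI n (ν m) (gshift lam n ξ ρ))
      = if l = m then (lam : ℂ) ^ n else 0 := by
  simp only [eI_mul_conj_eI, sum_eI_gshift, Pi.sub_apply]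
  by_cases hlm : l = m
  · simp [hlm, eI_zero]
  · rw [if_neg hlm, if_neg fun h ↦ hlm (hν m l fun i ↦ Int.modEq_iff_dvd.mpr (h i)).symm]

variable [Fintype ι]

theorem sum_norm_sq_sum_mul_eI_gshift
    (hν : ∀ l m, (∀ i, ν l i ≡ ν m i [ZMOD lam]) → l = m) (c : ι → ℂ) (ξ : Fin n → ℝ) :
    ∑ ρ ∈ Lambda lam n, ‖∑ l, c l * eI n (ν l) (gshift lam n ξ ρ)‖ ^ 2
      = (lam : ℝ) ^ n * ∑ l, ‖c l‖ ^ 2 := by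
  classical
  let e (l : ι) (ρ : Fin n → ℤ) : ℂ := eI n (ν l) (gshift lam n ξ ρ)
  have horth (l m : ι) :
      ∑ ρ ∈ Lambda lam n, e l ρ * starRingEnd ℂ (e m ρ) = if l = m then (lam : ℂ) ^ n else 0 :=
    sum_eI_mul_conj_eI_gshift hν ξ l m
  apply Complex.ofReal_injective
  push_cast
  simp only [← Complex.mul_conj']
  calc ∑ ρ ∈ Lambda lam n, (∑ l, c l * e l ρ) * starRingEnd ℂ (∑ m, c m * e m ρ)
    _ = ∑ l, ∑ m, c l * starRingEnd ℂ (c m) *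
          ∑ ρ ∈ Lambda lam n, e l ρ * starRingEnd ℂ (e m ρ) := by
      simp only [map_sum, map_mul, sum_mul_sum]
      simp only [mul_mul_mul_comm (c _), mul_sum]
      rw [sum_comm]
      exact sum_congr rfl fun l _ ↦ sum_comm
    _ = (lam : ℂ) ^ n * ∑ l, c l * starRingEnd ℂ (c l) := by
      simp only [horth, mul_ite, mul_zero, sum_ite_eq, mem_univ, if_true, ← sum_mul]
      rw [mul_comm]

theorem sum_norm_sq_polyphaseMask_gshift {p : ι → (Fin n → ℝ) → ℂ}
    (hp : ∀ l, IsTwoPiPeriodic (p l))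
    (hν : ∀ l m, (∀ i, ν l i ≡ ν m i [ZMOD lam]) → l = m) (ξ : Fin n → ℝ) :
    ∑ ρ ∈ Lambda lam n, ‖polyphaseMask lam p ν (gshift lam n ξ ρ)‖ ^ 2
      = ((lam : ℝ) ^ n)⁻¹ * ∑ l, ‖p l (dil lam n ξ)‖ ^ 2 := by
  have hlam : (lam : ℝ) ^ n ≠ 0 := pow_ne_zero _ (NeZero.ne _)
  simp only [polyphaseMask, (hp _).apply_dil_gshift, norm_mul, mul_pow, ← mul_sum,
    sum_norm_sq_sum_mul_eI_gshift hν, norm_inv, norm_pow, Complex.norm_natCast]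
  field_simp

/-- `W` stands for `1/S`, and `ν` may enumerate any complete residue system mod `λ`. -/
theorem oblique_subQMF_identity_general {W s τ : (Fin n → ℝ) → ℂ} {p g : ι → (Fin n → ℝ) → ℂ}
    {A : Finset ι} {ξ : Fin n → ℝ} (hp : ∀ l, IsTwoPiPeriodic (p l))
    (hν : ∀ l m, (∀ i, ν l i ≡ ν m i [ZMOD lam]) → l = m) (hcard : Fintype.card ι = lam ^ n)
    (hA : ∀ l ∈ A, W (dil lam n ξ) - ((‖p l (dil lam n ξ)‖ ^ 2 : ℝ) : ℂ)
      = (lam : ℂ) ^ n * ((‖g l (dil lam n ξ)‖ ^ 2 : ℝ) : ℂ))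
    (hAc : ∀ l ∉ A, ((‖p l (dil lam n ξ)‖ ^ 2 : ℝ) : ℂ) = W (dil lam n ξ))
    (hs₀ : ∀ ρ ∈ Lambda lam n, s (gshift lam n ξ ρ) ≠ 0)
    (hs : ∀ ρ ∈ Lambda lam n,
      ((‖s (gshift lam n ξ ρ)‖ ^ 2 : ℝ) : ℂ) = W (gshift lam n ξ ρ))
    (hτ : ∀ η, τ η = polyphaseMask lam p ν η / starRingEnd ℂ (s η)) :
    W (dil lam n ξ)
        - ∑ ρ ∈ Lambda lam n, ((‖τ (gshift lam n ξ ρ)‖ ^ 2 : ℝ) : ℂ) * W (gshift lam n ξ ρ)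
      = ∑ l ∈ A, ((‖g l (dil lam n ξ)‖ ^ 2 : ℝ) : ℂ) := by
  have hlam : (lam : ℂ) ^ n ≠ 0 := pow_ne_zero _ (NeZero.ne _)
  have hmask : ∀ ρ ∈ Lambda lam n,
      ((‖τ (gshift lam n ξ ρ)‖ ^ 2 : ℝ) : ℂ) * W (gshift lam n ξ ρ)
        = ((‖polyphaseMask lam p ν (gshift lam n ξ ρ)‖ ^ 2 : ℝ) : ℂ) := by
    intro ρ hρ
    have hnorm : ‖s (gshift lam n ξ ρ)‖ ^ 2 ≠ 0 := pow_ne_zero _ (norm_ne_zero_iff.mpr (hs₀ ρ hρ))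
    rw [← hs ρ hρ, hτ, norm_div, RCLike.norm_conj, div_pow, ← Complex.ofReal_mul,
      div_mul_cancel₀ _ hnorm]
  rw [sum_congr rfl hmask, ← Complex.ofReal_sum, sum_norm_sq_polyphaseMask_gshift hp hν,
    ← sub_inv_mul_sum_eq_sum hlam (by simp [hcard]) hA hAc]
  push_cast
  rfl

end Shifts

/-- the oblique sub-QMF identity for the shared-responsibility mask:
1/S(λξ) − Σ_{γ∈Γ} |τ(ξ+γ)|²/S(ξ+γ) = Σ_{l=1}^{N} |g_l(λξ)|²
wherever everything is defined. -/
theorem oblique_subQMF_identity (lam n N : ℕ) (hlam : 2 ≤ lam) (hn : 1 ≤ n)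
    (hN : N ≤ lam ^ n)
    (S : RatTrigPoly n)
    (hSreal : ∀ ξ, S.DefinedAt ξ → (S ξ).im = 0 ∧ 0 ≤ (S ξ).re)
    (p : Fin (lam ^ n) → RatTrigPoly n)
    (g : Fin (lam ^ n) → RatTrigPoly n)
    (hpg : ∀ l : Fin (lam ^ n), (l : ℕ) < N →
      ∀ ξ, S.DefinedAt ξ → S ξ ≠ 0 → (p l).DefinedAt ξ → (g l).DefinedAt ξ →
        (S ξ)⁻¹ - ((‖p l ξ‖ ^ 2 : ℝ) : ℂ) = (lam : ℂ) ^ n * ((‖g l ξ‖ ^ 2 : ℝ) : ℂ))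
    (hp1 : ∀ l : Fin (lam ^ n), N ≤ (l : ℕ) →
      ∀ ξ, S.DefinedAt ξ → S ξ ≠ 0 → (p l).DefinedAt ξ →
        ((‖p l ξ‖ ^ 2 : ℝ) : ℂ) = (S ξ)⁻¹)
    (s : RatTrigPoly n)
    (hs : ∀ ξ, s.DefinedAt ξ → S.DefinedAt ξ → S ξ ≠ 0 →
      ((‖s ξ‖ ^ 2 : ℝ) : ℂ) = (S ξ)⁻¹)
    (ν : Fin (lam ^ n) → Fin n → ℤ)
    (hν_inj : Function.Injective ν) (hν_mem : ∀ l, ν l ∈ Lambda lam n)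
    (hν_surj : ∀ ρ ∈ Lambda lam n, ∃ l, ν l = ρ)
    (τ : (Fin n → ℝ) → ℂ)
    (hτ : ∀ ξ, τ ξ = (((lam : ℂ) ^ n)⁻¹ * ∑ l, p l (dil lam n ξ) * eI n (ν l) ξ)
      / (starRingEnd ℂ) (s ξ))
    (ξ : Fin n → ℝ)
    (hdef : ∀ ρ ∈ Lambda lam n,
      s.DefinedAt (gshift lam n ξ ρ) ∧ s (gshift lam n ξ ρ) ≠ 0 ∧
      S.DefinedAt (gshift lam n ξ ρ) ∧ S (gshift lam n ξ ρ) ≠ 0 ∧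
      ∀ l, (p l).DefinedAt (dil lam n (gshift lam n ξ ρ)))
    (hdef' : ∀ l, (p l).DefinedAt (dil lam n ξ) ∧ (g l).DefinedAt (dil lam n ξ))
    (hdefS : S.DefinedAt (dil lam n ξ) ∧ S (dil lam n ξ) ≠ 0) :
    (S (dil lam n ξ))⁻¹
        - ∑ ρ ∈ Lambda lam n,
            ((‖τ (gshift lam n ξ ρ)‖ ^ 2 : ℝ) : ℂ) / S (gshift lam n ξ ρ)
      = ∑ l ∈ Finset.univ.filter (fun l : Fin (lam ^ n) => (l : ℕ) < N),
          ((‖g l (dil lam n ξ)‖ ^ 2 : ℝ) : ℂ) := by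
  have : NeZero lam := ⟨by lia⟩
  simpa only [div_eq_mul_inv] using oblique_subQMF_identity_general
    (W := fun η ↦ (S η)⁻¹) (g := fun l ↦ g l) (A := {l : Fin (lam ^ n) | (l : ℕ) < N})
    (fun l ↦ (p l).isTwoPiPeriodic)
    (fun l m h ↦ hν_inj (eq_of_modEq_of_mem_Lambda (hν_mem l) (hν_mem m) h))
    (Fintype.card_fin _)
    (fun l hl ↦ hpg l (by simpa using hl) _ hdefS.1 hdefS.2 (hdef' l).1 (hdef' l).2)
    (fun l hl ↦ hp1 l (by simpa using hl) _ hdefS.1 hdefS.2 (hdef' l).1)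
    (fun ρ hρ ↦ (hdef ρ hρ).2.1)
    (fun ρ hρ ↦ hs _ (hdef ρ hρ).1 (hdef ρ hρ).2.2.1 (hdef ρ hρ).2.2.2.1)
    hτ
end
end
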